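/- Let N ≥ 1 and let ζ_1, …, ζ_N, γ_1, …, γ_N be real numbers with |ζ_1| > |γ_1| > |ζ_2| > |γ_2| > … > |ζ_N| > |γ_N| > 0. Then there exists a unique real-valued sequence c ∈ h^{1/2} such that the self-adjoint operator Γ_c has rank N with nonzero eigenvalues exactly ζ_1, …, ζ_N, and the self-adjoint operator Γ̃_c has rank N with nonzero eigenvalues exactly γ_1, …, γ_N. -/

import Mathlib

open scoped InnerProductSpace ComplexConjugate ENNReal

noncomputable section

/-- The Hilbert space `ℓ²(ℕ, ℂ)`. -/
abbrev L2 : Type := lp (fun _ : ℕ => ℂ) 2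

/-- Membership in the space `h^{1/2}`: `c ∈ ℓ²` and `Σ n |c_n|² < ∞`. -/
def InH12 (c : ℕ → ℂ) : Prop :=
  Memℓp c 2 ∧ Summable (fun n : ℕ => (n : ℝ) * ‖c n‖ ^ 2)

/-- `Γ` is the Hankel operator of symbol `c`: `(Γ x)_n = Σ_p c_{n+p} x_p`. -/
def IsHankelOp (c : ℕ → ℂ) (Γ : L2 →L[ℂ] L2) : Prop :=
  ∀ x : L2, ∀ n : ℕ, (Γ x : ℕ → ℂ) n = ∑' p : ℕ, c (n + p) * (x : ℕ → ℂ) p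

/-- The shifted sequence `c̃ : n ↦ c_{n+1}`. -/
def shiftSeq (c : ℕ → ℂ) : ℕ → ℂ := fun n => c (n + 1)

/-!
The operators satisfy `⟪Γ x, Γ y⟫ = conj (Γ x)₀ (Γ y)₀ + ⟪Γ̃ x, Γ̃ y⟫`: the square of `Γ` is the
square of `Γ̃` plus a rank one operator. Let `e j`, `f k` be unit eigenvectors of `Γ`, `Γ̃`, with
phases chosen so that `a j = (Γ (e j))₀ ≥ 0` and `b k = (Γ (f k))₀ ≥ 0`. Then
`⟪f k, e j⟫ = b k a j / (ζ j ² - γ k ²)`, and orthonormality forces the `a j ²` to solve the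
Cauchy system `∑ j, a j ² / (ζ j ² - γ k ²) = 1`. Its solution is unique, and positive because the
squares interlace; it determines `b`. Hence the backward shift on the range of `Γ` is an explicit
matrix `T` in the basis `e`, and `c n = a ⬝ᵥ (a / ζ) Tⁿ`, which gives uniqueness.

Conversely, this `T` satisfies `Tᵀ T = 1 - u uᵀ` for `u = a / ζ`, and `T diag(ζ)` is symmetric.
These two properties force `T` to have spectral radius less than `1`, so the formula defines an
exponentially decaying sequence; the coordinates of `e` are orthonormal in `ℓ²` and
diagonalise its Hankel operator.
-/

section CauchySystem

open Finset Polynomial Lagrange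

section Field

variable {ι F : Type*} [Fintype ι] [Field F]

/-- The solution `w` of the Cauchy system `∑ j, w j / (x j - y k) = 1`, in closed form:
`w j = ∏ k, (x j - y k) / ∏ i ≠ j, (x j - x i)`. -/
def cauchyWeight [DecidableEq ι] (x y : ι → F) (j : ι) : F :=
  nodalWeight univ x j * (nodal univ y).eval (x j)

lemma sum_cauchyWeight_div_sub [DecidableEq ι] {x y : ι → F} (hx : Function.Injective x)
    (hxy : ∀ j k, x j ≠ y k) (k : ι) : ∑ j, cauchyWeight x y j / (x j - y k) = 1 := by
  set p : F[X] := nodal univ y - nodal univ x with hp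
  have hdeg : p.degree < #(univ : Finset ι) := by
    rw [← degree_nodal (v := y)]
    exact degree_sub_lt_left (degree_nodal.trans degree_nodal.symm) nodal_ne_zero
      (nodal_monic.leadingCoeff.trans nodal_monic.leadingCoeff.symm)
  have heval : p.eval (y k) = (nodal univ x).eval (y k) *
      ∑ j, nodalWeight univ x j * (y k - x j)⁻¹ * p.eval (x j) := by
    conv_lhs => rw [eq_interpolate hx.injOn hdeg]
    exact eval_interpolate_not_at_node _ fun j _ => (hxy j k).symm
  have hx_eval : (nodal univ x).eval (y k) ≠ 0 :=
    eval_nodal_not_at_node fun j _ => (hxy j k).symm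
  have hsum : ∑ j, nodalWeight univ x j * (y k - x j)⁻¹ * p.eval (x j) = -1 := by
    apply mul_left_cancel₀ hx_eval
    rw [← heval, hp, eval_sub, eval_nodal_at_node (mem_univ k)]
    ring
  rw [← neg_inj, ← hsum, ← sum_neg_distrib]
  refine sum_congr rfl fun j _ => ?_
  rw [cauchyWeight, hp, eval_sub, eval_nodal_at_node (mem_univ j), ← neg_sub (x j) (y k), inv_neg]
  ring

lemma eq_zero_of_sum_div_sub_eq_zero {x y d : ι → F} (hx : Function.Injective x)
    (hy : Function.Injective y) (hxy : ∀ j k, x j ≠ y k)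
    (hd : ∀ k, ∑ j, d j / (x j - y k) = 0) : d = 0 := by
  classical
  have hw (j) : nodalWeight univ x j ≠ 0 := nodalWeight_ne_zero hx.injOn (mem_univ j)
  have hinterp : interpolate univ x (fun j => d j / nodalWeight univ x j) = 0 := by
    refine eq_zero_of_degree_lt_of_eval_index_eq_zero (v := y) (s := univ) hy.injOn
      (degree_interpolate_lt _ hx.injOn) fun k _ => ?_
    rw [eval_interpolate_not_at_node _ fun j _ => (hxy j k).symm]
    refine mul_eq_zero_of_right _ ?_
    rw [← neg_eq_zero, ← hd k, ← sum_neg_distrib]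
    refine sum_congr rfl fun j _ => ?_
    rw [← neg_sub (x j) (y k), inv_neg]
    have := hw j
    field_simp
  funext j
  have hj := eval_interpolate_at_node (fun j => d j / nodalWeight univ x j) hx.injOn (mem_univ j)
  rw [hinterp, eval_zero] at hj
  exact (div_eq_zero_iff.1 hj.symm).resolve_right (hw j)

lemma eq_of_sum_div_sub_eq {x y w w' : ι → F} (hx : Function.Injective x)
    (hy : Function.Injective y) (hxy : ∀ j k, x j ≠ y k)
    (h : ∀ k, ∑ j, w j / (x j - y k) = ∑ j, w' j / (x j - y k)) : w = w' :=
  sub_eq_zero.1 <| eq_zero_of_sum_div_sub_eq_zero hx hy hxy fun k => by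
    simp only [Pi.sub_apply, sub_div, sum_sub_distrib, h, sub_self]

end Field

/-- The families `x` and `y` interlace strictly and decrease: `x₀ > y₀ > x₁ > y₁ > ⋯`. The second
condition is required for all pairs of indices, so that no successor operation is needed. -/
structure Interlaces {ι α : Type*} [Preorder ι] [Preorder α] (x y : ι → α) : Prop where
  lt (j : ι) : y j < x j
  lt_of_lt {j k : ι} (hjk : j < k) : x k < y j

lemma interlaces_of_succ {α : Type*} [Preorder α] {N : ℕ} {x y : Fin N → α}
    (hlt : ∀ j, y j < x j) (hsucc : ∀ j k : Fin N, (j : ℕ) + 1 = k → x k < y j) :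
    Interlaces x y where
  lt := hlt
  lt_of_lt {j k} hjk := by
    have hx : StrictAnti x := by
      cases N with
      | zero => exact Subsingleton.strictAnti x
      | succ n =>
        exact Fin.strictAnti_iff_succ_lt.2 fun i =>
          (hsucc i.castSucc i.succ (by simp)).trans (hlt _)
    have hj : (j : ℕ) + 1 < N := by omega
    exact (hx.antitone (show (⟨j + 1, hj⟩ : Fin N) ≤ k from hjk)).trans_lt (hsucc j _ rfl)

namespace Interlaces

section Preorder

variable {ι α : Type*} [LinearOrder ι] [Preorder α] {x y : ι → α}

lemma strictAnti_left (h : Interlaces x y) : StrictAnti x :=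
  fun _ _ hjk => (h.lt_of_lt hjk).trans (h.lt _)

lemma strictAnti_right (h : Interlaces x y) : StrictAnti y :=
  fun _ _ hjk => (h.lt _).trans (h.lt_of_lt hjk)

lemma ne (h : Interlaces x y) (j k : ι) : x j ≠ y k := by
  rcases lt_or_ge k j with hkj | hjk
  · exact (h.lt_of_lt hkj).ne
  · exact ((h.strictAnti_right.antitone hjk).trans_lt (h.lt j)).ne'

end Preorder

lemma cauchyWeight_pos {ι F : Type*} [Fintype ι] [LinearOrder ι] [Field F] [LinearOrder F]
    [IsStrictOrderedRing F] {x y : ι → F} (h : Interlaces x y) (j : ι) :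
    0 < cauchyWeight x y j := by
  rw [cauchyWeight, nodalWeight, eval_nodal, ← mul_prod_erase univ _ (mem_univ j),
    mul_left_comm, ← prod_mul_distrib]
  refine mul_pos (sub_pos.2 (h.lt j)) (prod_pos fun k hk => ?_)
  rcases lt_or_gt_of_ne (ne_of_mem_erase hk) with hkj | hjk
  · exact mul_pos_of_neg_of_neg (inv_lt_zero.2 (sub_neg.2 (h.strictAnti_left hkj)))
      (sub_neg.2 (h.lt_of_lt hkj))
  · exact mul_pos (inv_pos.2 (sub_pos.2 (h.strictAnti_left hjk)))
      (sub_pos.2 ((h.strictAnti_right hjk).trans (h.lt j)))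

end Interlaces

end CauchySystem

section CompressedShift

open Matrix

variable {ι : Type*} [Fintype ι] {ζ γ a b : ι → ℝ}

/-- The conditions on `a j = ⟪e j, c⟫` and `b k = ⟪f k, c⟫`, where `e` and `f` are the unit
eigenvectors of `Γ_c` and `Γ̃_c` for `ζ` and `γ`, with phases chosen so that `a` and `b` are
nonnegative. -/
structure IsSpectralWeight (ζ γ a b : ι → ℝ) : Prop where
  left_nonneg (j : ι) : 0 ≤ a j
  right_nonneg (k : ι) : 0 ≤ b k
  sum_div (k : ι) : ∑ j, a j ^ 2 / (ζ j ^ 2 - γ k ^ 2) = 1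
  sq_mul_sum_div (k : ι) : b k ^ 2 * ∑ j, a j ^ 2 / (ζ j ^ 2 - γ k ^ 2) ^ 2 = 1

/-- The matrix of the overlaps `⟪f k, e j⟫` of the eigenvectors of `Γ_c` and `Γ̃_c`. -/
def overlapMatrix (ζ γ a b : ι → ℝ) : Matrix ι ι ℝ :=
  of fun k j => b k * a j / (ζ j ^ 2 - γ k ^ 2)

/-- The matrix, in the basis `e` of eigenvectors of `Γ_c`, of `Γ̃_c` restricted to the range of
`Γ_c`. -/
def shiftedHankelMatrix [DecidableEq ι] (ζ γ a b : ι → ℝ) : Matrix ι ι ℝ :=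
  (overlapMatrix ζ γ a b)ᵀ * diagonal γ * overlapMatrix ζ γ a b

/-- The matrix, in the basis `e` of eigenvectors of `Γ_c`, of the backward shift restricted to the
range of `Γ_c`: since `Γ̃_c` is the shift of `Γ_c`, it is obtained from `shiftedHankelMatrix` by
dividing the `j`-th column by `ζ j`. -/
def shiftMatrix [DecidableEq ι] (ζ γ a b : ι → ℝ) : Matrix ι ι ℝ :=
  shiftedHankelMatrix ζ γ a b * diagonal ζ⁻¹

/-- The `n`-th coordinates of the eigenvectors `e` of `Γ_c`, obtained by applying the backward shift
`n` times and then evaluating at `0`. -/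
def eigenvectorCoord [DecidableEq ι] (ζ γ a b : ι → ℝ) (n : ℕ) : ι → ℝ :=
  (a / ζ) ᵥ* shiftMatrix ζ γ a b ^ n

/-- The sequence `c = ∑ j, a j • e j` recovered from the spectral data. -/
def spectralSymbol [DecidableEq ι] (ζ γ a b : ι → ℝ) (n : ℕ) : ℝ :=
  a ⬝ᵥ eigenvectorCoord ζ γ a b n

lemma IsSpectralWeight.unique {a' b' : ι → ℝ} (h : IsSpectralWeight ζ γ a b)
    (h' : IsSpectralWeight ζ γ a' b') (hζ : Function.Injective (ζ ^ 2))
    (hγ : Function.Injective (γ ^ 2)) (hζγ : ∀ j k, ζ j ^ 2 ≠ γ k ^ 2) : a = a' ∧ b = b' := by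
  have ha_sq : a ^ 2 = a' ^ 2 := eq_of_sum_div_sub_eq hζ hγ hζγ fun k =>
    (h.sum_div k).trans (h'.sum_div k).symm
  have ha : a = a' := funext fun j =>
    (pow_left_inj₀ (h.left_nonneg j) (h'.left_nonneg j) two_ne_zero).1 (congrFun ha_sq j)
  subst ha
  refine ⟨rfl, funext fun k => (pow_left_inj₀ (h.right_nonneg k) (h'.right_nonneg k)
    two_ne_zero).1 ?_⟩
  have hk := h.sq_mul_sum_div k
  exact mul_right_cancel₀ (right_ne_zero_of_mul_eq_one hk) (hk.trans (h'.sq_mul_sum_div k).symm)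

lemma exists_isSpectralWeight [LinearOrder ι] (h : Interlaces (ζ ^ 2) (γ ^ 2)) :
    ∃ a b, IsSpectralWeight ζ γ a b := by
  have hw (j) : 0 < cauchyWeight (ζ ^ 2) (γ ^ 2) j := h.cauchyWeight_pos j
  set w := cauchyWeight (ζ ^ 2) (γ ^ 2)
  have hw_sq (j) : √(w j) ^ 2 = w j := Real.sq_sqrt (hw j).le
  have hpos (k) : 0 < ∑ j, w j / (ζ j ^ 2 - γ k ^ 2) ^ 2 :=
    Finset.sum_pos (fun j _ => div_pos (hw j) (sq_pos_of_ne_zero (sub_ne_zero.2 (h.ne j k))))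
      ⟨k, Finset.mem_univ k⟩
  refine ⟨fun j => √(w j), fun k => √(∑ j, w j / (ζ j ^ 2 - γ k ^ 2) ^ 2)⁻¹,
    fun j => Real.sqrt_nonneg _, fun k => Real.sqrt_nonneg _, fun k => ?_, fun k => ?_⟩
  · simp only [hw_sq]
    exact sum_cauchyWeight_div_sub h.strictAnti_left.injective h.ne k
  · simp only [hw_sq]
    rw [Real.sq_sqrt (inv_nonneg.2 (hpos k).le), inv_mul_cancel₀ (hpos k).ne']

namespace IsSpectralWeight

lemma overlapMatrix_mulVec (h : IsSpectralWeight ζ γ a b) :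
    overlapMatrix ζ γ a b *ᵥ a = b := by
  funext k
  rw [← mul_one (b k), ← h.sum_div k, Finset.mul_sum]
  exact Finset.sum_congr rfl fun j _ => by simp only [overlapMatrix, of_apply]; ring

lemma overlapMatrix_mul_transpose [DecidableEq ι] (h : IsSpectralWeight ζ γ a b)
    (hγ : Function.Injective (γ ^ 2)) (hζγ : ∀ j k, ζ j ^ 2 ≠ γ k ^ 2) :
    overlapMatrix ζ γ a b * (overlapMatrix ζ γ a b)ᵀ = 1 := by
  ext k l
  simp only [mul_apply, transpose_apply, overlapMatrix, of_apply, one_apply]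
  split_ifs with hkl
  · rw [← h.sq_mul_sum_div k, ← hkl, Finset.mul_sum]
    exact Finset.sum_congr rfl fun j _ => by rw [div_mul_div_comm, ← sq, mul_div_assoc']; ring
  · have hkl' : γ k ^ 2 - γ l ^ 2 ≠ 0 := sub_ne_zero.2 (hγ.ne hkl)
    have hsum : ∑ j, b k * a j / (ζ j ^ 2 - γ k ^ 2) * (b l * a j / (ζ j ^ 2 - γ l ^ 2)) =
        b k * b l / (γ k ^ 2 - γ l ^ 2) *
          (∑ j, a j ^ 2 / (ζ j ^ 2 - γ k ^ 2) - ∑ j, a j ^ 2 / (ζ j ^ 2 - γ l ^ 2)) := by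
      rw [← Finset.sum_sub_distrib, Finset.mul_sum]
      refine Finset.sum_congr rfl fun j _ => ?_
      have hk := sub_ne_zero.2 (hζγ j k)
      have hl := sub_ne_zero.2 (hζγ j l)
      field_simp
      ring
    rw [hsum, h.sum_div, h.sum_div, sub_self, mul_zero]

lemma transpose_mul_overlapMatrix [DecidableEq ι] (h : IsSpectralWeight ζ γ a b)
    (hγ : Function.Injective (γ ^ 2)) (hζγ : ∀ j k, ζ j ^ 2 ≠ γ k ^ 2) :
    (overlapMatrix ζ γ a b)ᵀ * overlapMatrix ζ γ a b = 1 :=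
  mul_eq_one_comm.1 (h.overlapMatrix_mul_transpose hγ hζγ)

lemma left_ne_zero (h : IsSpectralWeight ζ γ a b) (hγ : Function.Injective (γ ^ 2))
    (hζγ : ∀ j k, ζ j ^ 2 ≠ γ k ^ 2) (j : ι) : a j ≠ 0 := by
  classical
  intro haj
  have hjj := congrFun₂ (h.transpose_mul_overlapMatrix hγ hζγ) j j
  simp [mul_apply, overlapMatrix, haj] at hjj

lemma overlapMatrix_mul_diagonal_sub [DecidableEq ι] (h : IsSpectralWeight ζ γ a b)
    (hζγ : ∀ j k, ζ j ^ 2 ≠ γ k ^ 2) :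
    overlapMatrix ζ γ a b * (diagonal (ζ ^ 2) - vecMulVec a a) =
      diagonal (γ ^ 2) * overlapMatrix ζ γ a b := by
  rw [mul_sub, mul_vecMulVec, h.overlapMatrix_mulVec]
  ext k j
  have hkj := sub_ne_zero.2 (hζγ j k)
  simp only [Matrix.sub_apply, mul_diagonal, diagonal_mul, vecMulVec_apply, overlapMatrix, of_apply,
    Pi.pow_apply]
  field_simp
  ring

end IsSpectralWeight

variable [DecidableEq ι]

lemma eigenvectorCoord_succ (n : ℕ) :
    eigenvectorCoord ζ γ a b (n + 1) = eigenvectorCoord ζ γ a b n ᵥ* shiftMatrix ζ γ a b := by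
  rw [eigenvectorCoord, pow_succ, ← vecMul_vecMul, eigenvectorCoord]

lemma transpose_shiftedHankelMatrix :
    (shiftedHankelMatrix ζ γ a b)ᵀ = shiftedHankelMatrix ζ γ a b := by
  simp only [shiftedHankelMatrix, transpose_mul, transpose_transpose, diagonal_transpose, mul_assoc]

lemma shiftMatrix_mul_diagonal (hζ : ∀ j, ζ j ≠ 0) :
    shiftMatrix ζ γ a b * diagonal ζ = shiftedHankelMatrix ζ γ a b := by
  have hinv : ζ⁻¹ * ζ = 1 := funext fun j => inv_mul_cancel₀ (hζ j)
  rw [shiftMatrix, mul_assoc, diagonal_mul_diagonal, ← Pi.mul_def, hinv,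
    diagonal_one', mul_one]

lemma shiftMatrix_mul_diagonal_comm (hζ : ∀ j, ζ j ≠ 0) :
    shiftMatrix ζ γ a b * diagonal ζ = diagonal ζ * (shiftMatrix ζ γ a b)ᵀ := by
  rw [← diagonal_transpose ζ, ← transpose_mul, diagonal_transpose, shiftMatrix_mul_diagonal hζ,
    transpose_shiftedHankelMatrix]

namespace IsSpectralWeight

lemma shiftedHankelMatrix_mul_self (h : IsSpectralWeight ζ γ a b)
    (hγ : Function.Injective (γ ^ 2)) (hζγ : ∀ j k, ζ j ^ 2 ≠ γ k ^ 2) :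
    shiftedHankelMatrix ζ γ a b * shiftedHankelMatrix ζ γ a b =
      diagonal (ζ ^ 2) - vecMulVec a a := by
  set F := overlapMatrix ζ γ a b with hF
  calc shiftedHankelMatrix ζ γ a b * shiftedHankelMatrix ζ γ a b
    _ = Fᵀ * diagonal γ * (F * Fᵀ) * diagonal γ * F := by
      simp only [shiftedHankelMatrix, ← hF, mul_assoc]
    _ = Fᵀ * (diagonal (γ ^ 2) * F) := by
      rw [h.overlapMatrix_mul_transpose hγ hζγ, mul_one, mul_assoc Fᵀ, diagonal_mul_diagonal,
        mul_assoc, sq, ← Pi.mul_def]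
    _ = (Fᵀ * F) * (diagonal (ζ ^ 2) - vecMulVec a a) := by
      rw [← h.overlapMatrix_mul_diagonal_sub hζγ, mul_assoc]
    _ = diagonal (ζ ^ 2) - vecMulVec a a := by
      rw [h.transpose_mul_overlapMatrix hγ hζγ, one_mul]

lemma transpose_shiftMatrix_mul_self (h : IsSpectralWeight ζ γ a b) (hζ : ∀ j, ζ j ≠ 0)
    (hγ : Function.Injective (γ ^ 2)) (hζγ : ∀ j k, ζ j ^ 2 ≠ γ k ^ 2) :
    (shiftMatrix ζ γ a b)ᵀ * shiftMatrix ζ γ a b = 1 - vecMulVec (a / ζ) (a / ζ) := by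
  rw [shiftMatrix, transpose_mul, diagonal_transpose, transpose_shiftedHankelMatrix, mul_assoc,
    ← mul_assoc (shiftedHankelMatrix ζ γ a b), h.shiftedHankelMatrix_mul_self hγ hζγ]
  ext i j
  have hi := hζ i
  have hj := hζ j
  rcases eq_or_ne i j with rfl | hij
  · simp [vecMulVec_apply]
    field_simp
  · simp [vecMulVec_apply, hij]
    field_simp

end IsSpectralWeight

end CompressedShift

section DiagonalOperator

variable {𝕜 E ι : Type*} [RCLike 𝕜] [NormedAddCommGroup E] [InnerProductSpace 𝕜 E]

lemma span_range_le_range {K : E →ₗ[𝕜] E} {l : ι → 𝕜} {v : ι → E} (hl : ∀ j, l j ≠ 0)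
    (hKv : ∀ j, K (v j) = l j • v j) : Submodule.span 𝕜 (Set.range v) ≤ LinearMap.range K := by
  rw [Submodule.span_le]
  rintro _ ⟨j, rfl⟩
  exact ⟨(l j)⁻¹ • v j, by rw [map_smul, hKv, inv_smul_smul₀ (hl j)]⟩

variable [Fintype ι]

/-- The finite rank operator `x ↦ ∑ j, l j ⟪v j, x⟫ v j`, which is diagonal with eigenvalues `l`
when the family `v` is orthonormal. -/
def diagonalOp (l : ι → 𝕜) (v : ι → E) : E →L[𝕜] E :=
  ∑ j, l j • InnerProductSpace.rankOne 𝕜 (v j) (v j)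

lemma diagonalOp_apply (l : ι → 𝕜) (v : ι → E) (x : E) :
    diagonalOp l v x = ∑ j, (l j * inner 𝕜 (v j) x) • v j := by
  simp [diagonalOp, smul_smul]

lemma diagonalOp_apply_self {l : ι → 𝕜} {v : ι → E} (hv : Orthonormal 𝕜 v) (j : ι) :
    diagonalOp l v (v j) = l j • v j := by
  classical
  simp [diagonalOp_apply, orthonormal_iff_ite.1 hv]

lemma inner_diagonalOp_right {l : ι → 𝕜} {v : ι → E} (hv : Orthonormal 𝕜 v) (j : ι) (x : E) :
    inner 𝕜 (v j) (diagonalOp l v x) = l j * inner 𝕜 (v j) x := by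
  rw [diagonalOp_apply, hv.inner_right_fintype]

/-- The operator `K` has rank `card ι` and its nonzero eigenvalues are exactly the `l j`. -/
def HasFiniteSpectrum (K : E →ₗ[𝕜] E) (l : ι → 𝕜) : Prop :=
  LinearMap.rank K = Fintype.card ι ∧ {z : 𝕜 | z ≠ 0 ∧ Module.End.HasEigenvalue K z} = Set.range l

lemma hasFiniteSpectrum_diagonalOp {l : ι → 𝕜} {v : ι → E} (hv : Orthonormal 𝕜 v)
    (hl : ∀ j, l j ≠ 0) : HasFiniteSpectrum (diagonalOp l v).toLinearMap l := by
  have hKv (j) : diagonalOp l v (v j) = l j • v j := diagonalOp_apply_self hv j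
  constructor
  · have hrange :
        LinearMap.range (diagonalOp l v).toLinearMap = Submodule.span 𝕜 (Set.range v) := by
      refine le_antisymm ?_ (span_range_le_range hl hKv)
      rintro _ ⟨x, rfl⟩
      rw [ContinuousLinearMap.coe_coe, diagonalOp_apply]
      exact Submodule.sum_mem _ fun j _ =>
        Submodule.smul_mem _ _ (Submodule.subset_span (Set.mem_range_self j))
    have : FiniteDimensional 𝕜 (Submodule.span 𝕜 (Set.range v)) :=
      FiniteDimensional.span_of_finite 𝕜 (Set.finite_range v)
    rw [LinearMap.rank, hrange, ← Module.finrank_eq_rank,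
      finrank_span_eq_card hv.linearIndependent]
  · refine Set.Subset.antisymm ?_ ?_
    · rintro z ⟨hz, hev⟩
      obtain ⟨x, hx⟩ := hev.exists_hasEigenvector
      have hKx : diagonalOp l v x = z • x := hx.apply_eq_smul
      by_contra hzl
      have horth (j) : inner 𝕜 (v j) x = 0 := by
        have h := inner_diagonalOp_right (l := l) hv j x
        rw [hKx, inner_smul_right] at h
        exact (mul_eq_mul_right_iff.1 h).resolve_left fun h => hzl ⟨j, h.symm⟩
      have hzx : z • x = 0 := by simp [← hKx, diagonalOp_apply, horth]
      exact (smul_ne_zero hz hx.2) hzx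
    · rintro _ ⟨j, rfl⟩
      exact ⟨hl j, Module.End.hasEigenvalue_of_hasEigenvector
        ⟨Module.End.mem_eigenspace_iff.2 (hKv j), hv.ne_zero j⟩⟩

lemma exists_unit_eigenvector_norm_eq {K : E →ₗ[𝕜] E} {μ : 𝕜} (hμ : Module.End.HasEigenvalue K μ)
    (φ : E →ₗ[𝕜] 𝕜) : ∃ v : E, ‖v‖ = 1 ∧ K v = μ • v ∧ φ v = (‖φ v‖ : 𝕜) := by
  obtain ⟨x, hx⟩ := hμ.exists_hasEigenvector
  obtain ⟨z, hz, hzφ⟩ := RCLike.exists_norm_eq_mul_self (φ x)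
  have hnorm : ‖z • (‖x‖ : 𝕜)⁻¹ • x‖ = 1 := by rw [norm_smul, hz, norm_smul_inv_norm hx.2, one_mul]
  refine ⟨z • (‖x‖ : 𝕜)⁻¹ • x, hnorm, ?_, ?_⟩
  · rw [map_smul, map_smul, hx.apply_eq_smul, smul_comm _ μ, smul_comm _ μ]
  · simp only [map_smul, smul_eq_mul, norm_mul, hz, one_mul, RCLike.ofReal_mul, norm_inv,
      RCLike.norm_ofReal, abs_norm, RCLike.ofReal_inv, hzφ]
    ring

lemma exists_orthonormal_eq_diagonalOp {K : E →L[𝕜] E} {l : ι → 𝕜} (hK : K.IsSymmetric)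
    (hl : ∀ j, l j ≠ 0) (hinj : Function.Injective l) (hspec : HasFiniteSpectrum K.toLinearMap l)
    (φ : E →ₗ[𝕜] 𝕜) :
    ∃ v : ι → E, Orthonormal 𝕜 v ∧ K = diagonalOp l v ∧ ∀ j, φ (v j) = (‖φ (v j)‖ : 𝕜) := by
  obtain ⟨hrank, hspec⟩ := hspec
  have hev (j) : Module.End.HasEigenvalue K.toLinearMap (l j) :=
    (hspec.symm ▸ Set.mem_range_self j : l j ∈ {z : 𝕜 | z ≠ 0 ∧ _}).2
  choose v hnorm hKv hφ using fun j => exists_unit_eigenvector_norm_eq (hev j) φ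
  have hv : Orthonormal 𝕜 v := by
    refine ⟨hnorm, fun i j hij => ?_⟩
    exact Submodule.isOrtho_iff_inner_eq.1
      (hK.orthogonalFamily_eigenspaces.isOrtho (hinj.ne hij)) _
      (Module.End.mem_eigenspace_iff.2 (hKv i)) _ (Module.End.mem_eigenspace_iff.2 (hKv j))
  have hfin : FiniteDimensional 𝕜 (LinearMap.range K.toLinearMap) :=
    Module.rank_lt_aleph0_iff.1 (by
      rw [← LinearMap.rank, hrank]; exact Cardinal.natCast_lt_aleph0)
  have hspan : Submodule.span 𝕜 (Set.range v) = LinearMap.range K.toLinearMap := by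
    refine Submodule.eq_of_le_of_finrank_eq (span_range_le_range hl hKv) ?_
    rw [finrank_span_eq_card hv.linearIndependent, Module.finrank, ← LinearMap.rank, hrank,
      Cardinal.toNat_natCast]
  refine ⟨v, hv, ContinuousLinearMap.ext fun x => ?_, hφ⟩
  obtain ⟨r, hr⟩ := (Submodule.mem_span_range_iff_exists_fun 𝕜).1
    (hspan ▸ LinearMap.mem_range_self K.toLinearMap x)
  rw [diagonalOp_apply, ← ContinuousLinearMap.coe_coe, ← hr]
  refine Finset.sum_congr rfl fun j _ => ?_
  rw [← hv.inner_right_fintype r j, hr, ← hK, hKv, inner_smul_left,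
    hK.conj_eigenvalue_eq_self (hev j)]

lemma orthonormal_sum_smul {κ : Type*} [DecidableEq κ] {v : ι → E} (hv : Orthonormal 𝕜 v)
    {U : Matrix κ ι 𝕜} (hU : U * U.conjTranspose = 1) :
    Orthonormal 𝕜 fun k => ∑ j, U k j • v j := by
  rw [orthonormal_iff_ite]
  intro k l
  have h := congrFun (congrFun hU l) k
  simp only [Matrix.mul_apply, Matrix.conjTranspose_apply, Matrix.one_apply] at h
  simp only [hv.inner_sum, mul_comm, starRingEnd_apply, h, eq_comm]

end DiagonalOperator

section Stability

open Matrix Filter Asymptotics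

/-- The sequences `m ↦ l j ^ m` are distinct characters of the additive monoid `ℕ`, so Dedekind's
theorem applies. -/
lemma eq_zero_of_forall_sum_mul_pow_eq_zero {ι R : Type*} [Fintype ι] [CommRing R] [IsDomain R]
    {l c : ι → R} (hl : Function.Injective l) (h : ∀ m : ℕ, ∑ j, c j * l j ^ m = 0) : c = 0 := by
  have hindep := (linearIndependent_monoidHom (Multiplicative ℕ) R).comp
    (fun j => powersHom R (l j)) ((powersHom R).injective.comp hl)
  refine funext (Fintype.linearIndependent_iff.1 hindep c (funext fun m => ?_))
  simpa using h m.toAdd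

section RCLike

variable {𝕜 ι : Type*} [RCLike 𝕜] [Fintype ι] [DecidableEq ι] {T : Matrix ι ι 𝕜} {l u : ι → 𝕜}

lemma sum_norm_sq_mulVec (hT : Tᴴ * T = 1 - vecMulVec u (star u)) (v : ι → 𝕜) :
    ∑ i, ‖(T *ᵥ v) i‖ ^ 2 = ∑ i, ‖v i‖ ^ 2 - ‖star u ⬝ᵥ v‖ ^ 2 := by
  have hnorm (w : ι → 𝕜) : star w ⬝ᵥ w = ((∑ i, ‖w i‖ ^ 2 : ℝ) : 𝕜) := by
    simp [dotProduct, RCLike.conj_mul]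
  have h : star (T *ᵥ v) ⬝ᵥ T *ᵥ v = star v ⬝ᵥ v - star (star u ⬝ᵥ v) * (star u ⬝ᵥ v) := by
    rw [star_mulVec, ← dotProduct_mulVec, mulVec_mulVec, hT, sub_mulVec, one_mulVec,
      vecMulVec_mulVec, dotProduct_sub, op_smul_eq_smul, dotProduct_smul, star_dotProduct v u,
      smul_eq_mul, mul_comm]
  rw [hnorm, hnorm, ← starRingEnd_apply, RCLike.conj_mul] at h
  exact_mod_cast h

lemma dotProduct_eq_zero_of_norm_eq_one (hT : Tᴴ * T = 1 - vecMulVec u (star u)) {z : 𝕜}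
    {v : ι → 𝕜} (hz : ‖z‖ = 1) (hv : T *ᵥ v = z • v) : star u ⬝ᵥ v = 0 := by
  have h := sum_norm_sq_mulVec hT v
  simp only [hv, Pi.smul_apply, norm_smul, hz, one_mul] at h
  exact norm_eq_zero.1 (pow_eq_zero_iff two_ne_zero |>.1 (by linarith))

lemma mulVec_mul_eq_inv_smul (hT : Tᴴ * T = 1 - vecMulVec u (star u))
    (hTl : T * diagonal l = diagonal l * Tᴴ) {z : 𝕜} {v : ι → 𝕜} (hz : ‖z‖ = 1)
    (hv : T *ᵥ v = z • v) : T *ᵥ (l * v) = z⁻¹ • (l * v) := by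
  have hz0 : z ≠ 0 := norm_ne_zero_iff.1 (by simp [hz])
  have hadj : Tᴴ *ᵥ v = z⁻¹ • v := by
    rw [eq_inv_smul_iff₀ hz0, ← mulVec_smul, ← hv, mulVec_mulVec, hT, sub_mulVec, one_mulVec,
      vecMulVec_mulVec, dotProduct_eq_zero_of_norm_eq_one hT hz hv]
    simp
  have hl (w : ι → 𝕜) : l * w = diagonal l *ᵥ w := (funext fun i => mulVec_diagonal l w i).symm
  rw [hl, mulVec_mulVec, hTl, ← mulVec_mulVec, hadj, mulVec_smul]

/-- An eigenvector `v` for a unimodular eigenvalue yields eigenvectors `l ^ m * v` for unimodular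
eigenvalues, all of them orthogonal to `u`; a Vandermonde argument then forces `v = 0`. -/
lemma norm_lt_one_of_mulVec_eq_smul (hT : Tᴴ * T = 1 - vecMulVec u (star u))
    (hTl : T * diagonal l = diagonal l * Tᴴ) (hl : Function.Injective l) (hu : ∀ j, u j ≠ 0)
    {z : 𝕜} {v : ι → 𝕜} (hv : v ≠ 0) (hTv : T *ᵥ v = z • v) : ‖z‖ < 1 := by
  have hle : ‖z‖ ≤ 1 := by
    obtain ⟨i, hi⟩ := Function.ne_iff.1 hv
    have hpos : 0 < ∑ i, ‖v i‖ ^ 2 :=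
      Finset.sum_pos' (fun i _ => by positivity)
        ⟨i, Finset.mem_univ i, by have := norm_pos_iff.2 hi; positivity⟩
    have h := sum_norm_sq_mulVec hT v
    simp only [hTv, Pi.smul_apply, norm_smul, mul_pow, ← Finset.mul_sum] at h
    refine (sq_le_one_iff₀ (norm_nonneg z)).1 (le_of_mul_le_mul_right ?_ hpos)
    linarith [sq_nonneg ‖star u ⬝ᵥ v‖]
  refine hle.lt_of_ne fun hz => hv ?_
  have heig (m : ℕ) : ∃ z' : 𝕜, ‖z'‖ = 1 ∧ T *ᵥ (l ^ m * v) = z' • (l ^ m * v) := by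
    induction m with
    | zero => exact ⟨z, hz, by simpa using hTv⟩
    | succ m ih =>
      obtain ⟨z', hz', h⟩ := ih
      refine ⟨z'⁻¹, by simp [hz'], ?_⟩
      simpa only [pow_succ', mul_assoc] using mulVec_mul_eq_inv_smul hT hTl hz' h
  have hzero : (fun j => star (u j) * v j) = 0 := by
    refine eq_zero_of_forall_sum_mul_pow_eq_zero hl fun m => ?_
    obtain ⟨z', hz', h⟩ := heig m
    rw [← dotProduct_eq_zero_of_norm_eq_one hT hz' h]
    refine Finset.sum_congr rfl fun j _ => ?_
    simp only [Pi.star_apply, Pi.mul_apply, Pi.pow_apply]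
    ring
  funext j
  exact (mul_eq_zero.1 (congrFun hzero j)).resolve_left (star_ne_zero.2 (hu j))

end RCLike

lemma exists_isBigO_pow_of_spectralRadius_lt_one {A : Type*} [NormedRing A] [NormedAlgebra ℂ A]
    [CompleteSpace A] {a : A} (ha : spectralRadius ℂ a < 1) :
    ∃ r ∈ Set.Ioo (0 : ℝ) 1, (fun n : ℕ => a ^ n) =O[atTop] fun n => r ^ n := by
  obtain ⟨r, har, hr⟩ := ENNReal.lt_iff_exists_nnreal_btwn.1 ha
  refine ⟨r, ⟨by exact_mod_cast (zero_le).trans_lt har, by exact_mod_cast hr⟩, .of_bound' ?_⟩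
  have hGelfand := spectrum.pow_nnnorm_pow_one_div_tendsto_nhds_spectralRadius a
  filter_upwards [hGelfand.eventually_lt_const har, eventually_ne_atTop 0] with n hn hn0
  have h : (‖a ^ n‖₊ : ℝ≥0∞) ≤ (r : ℝ≥0∞) ^ n := by
    rw [← ENNReal.rpow_natCast, ← ENNReal.rpow_inv_le_iff (by positivity), ← one_div]
    exact hn.le
  rw [Real.norm_of_nonneg (by positivity)]
  exact_mod_cast h

variable {ι : Type*} [Fintype ι] [DecidableEq ι]

attribute [local instance] Matrix.linftyOpNormedRing Matrix.linftyOpNormedAlgebra in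
lemma exists_isBigO_pow_apply {T : Matrix ι ι ℂ}
    (hT : ∀ (z : ℂ) (v : ι → ℂ), v ≠ 0 → T *ᵥ v = z • v → ‖z‖ < 1) :
    ∃ r ∈ Set.Ioo (0 : ℝ) 1, ∀ i j, (fun n : ℕ => (T ^ n) i j) =O[atTop] fun n => r ^ n := by
  have : CompleteSpace (Matrix ι ι ℂ) := FiniteDimensional.complete ℂ _
  have hradius : spectralRadius ℂ T < 1 := by
    rcases subsingleton_or_nontrivial (Matrix ι ι ℂ) with hsub | hnontriv
    · simp [spectrum.SpectralRadius.of_subsingleton]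
    refine spectrum.spectralRadius_lt_of_forall_lt T fun z hz => ?_
    rw [← spectrum_toLin', ← Module.End.hasEigenvalue_iff_mem_spectrum] at hz
    obtain ⟨v, hv⟩ := hz.exists_hasEigenvector
    exact hT z v hv.2 (by simpa using hv.apply_eq_smul)
  obtain ⟨r, hr, hO⟩ := exists_isBigO_pow_of_spectralRadius_lt_one hradius
  exact ⟨r, hr, fun i j =>
    ((entryLinearMap ℂ ℂ i j).toContinuousLinearMap.isBigO_comp _ _).trans hO⟩

lemma exists_isBigO_pow_apply_of_transpose_mul_self {T : Matrix ι ι ℝ} {l u : ι → ℝ}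
    (hT : Tᵀ * T = 1 - vecMulVec u u) (hTl : T * diagonal l = diagonal l * Tᵀ)
    (hl : Function.Injective l) (hu : ∀ j, u j ≠ 0) :
    ∃ r ∈ Set.Ioo (0 : ℝ) 1, ∀ i j, (fun n : ℕ => (T ^ n) i j) =O[atTop] fun n => r ^ n := by
  set f : ℝ →+* ℂ := Complex.ofRealHom
  have hadj : (T.map f)ᴴ = Tᵀ.map f := by ext; simp [f]
  have hstar : star (f ∘ u) = f ∘ u := by ext; simp [f]
  have hdiag : diagonal (f ∘ l) = (diagonal l).map f := by simp [diagonal_map, Function.comp_def]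
  obtain ⟨r, hr, hO⟩ := exists_isBigO_pow_apply (T := T.map f) fun z v =>
    norm_lt_one_of_mulVec_eq_smul (l := f ∘ l) (u := f ∘ u)
      (by
        rw [hadj, ← Matrix.map_mul, hT, hstar]
        ext i j
        simp [vecMulVec_apply, one_apply, apply_ite f])
      (by rw [hadj, hdiag, ← Matrix.map_mul, ← Matrix.map_mul, hTl])
      (Complex.ofReal_injective.comp hl) fun j => by simpa [f] using hu j
  refine ⟨r, hr, fun i j => ?_⟩
  simpa [← Matrix.map_pow, f, Complex.isBigO_ofReal_left] using hO i j

end Stability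

section Realization

open Matrix Filter Asymptotics

lemma inH12_of_isBigO_pow {c : ℕ → ℂ} {r : ℝ} (hr : r ∈ Set.Ioo 0 1)
    (hc : c =O[atTop] fun n => r ^ n) : InH12 c := by
  have hr_sq : ‖r ^ 2‖ < 1 := by
    rw [Real.norm_of_nonneg (by positivity)]
    exact pow_lt_one₀ hr.1.le hr.2 two_ne_zero
  have hsq : (fun n => ‖c n‖ ^ 2) =O[atTop] fun n => (r ^ 2) ^ n := by
    simpa only [pow_right_comm] using hc.norm_left.pow 2
  have hsummable (k : ℕ) : Summable fun n : ℕ => (n : ℝ) ^ k * ‖c n‖ ^ 2 :=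
    summable_of_isBigO_nat (summable_pow_mul_geometric_of_norm_lt_one k hr_sq)
      ((isBigO_refl _ _).mul hsq)
  exact ⟨memℓp_gen (by simpa using hsummable 0), by simpa using hsummable 1⟩

variable {ι : Type*}

lemma exists_orthonormal_coe_eq [DecidableEq ι] {f : ι → ℕ → ℝ}
    (hf : ∀ i j, HasSum (fun n => f i n * f j n) (if i = j then 1 else 0)) :
    ∃ v : ι → L2, Orthonormal ℂ v ∧ ∀ j n, v j n = f j n := by
  have hmem (j) : Memℓp (fun n => (f j n : ℂ)) 2 :=
    memℓp_gen (by simpa [← sq] using (hf j j).summable)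
  refine ⟨fun j => ⟨_, hmem j⟩, orthonormal_iff_ite.2 fun i j => ?_, fun j n => rfl⟩
  have h := ((hf j i).mapL Complex.ofRealCLM).tsum_eq
  simpa [lp.inner_eq_tsum, apply_ite, eq_comm] using h

variable [Fintype ι]

lemma isHankelOp_diagonalOp {c : ℕ → ℂ} {l : ι → ℂ} {v : ι → L2}
    (hc : ∀ n p, c (n + p) = ∑ j, l j * v j n * conj (v j p)) :
    IsHankelOp c (diagonalOp l v) := by
  intro x n
  have hinner (j) : HasSum (fun p => l j * v j n * inner ℂ (v j p) (x p))
      (l j * v j n * inner ℂ (v j) x) :=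
    HasSum.mul_left (l j * v j n) (lp.hasSum_inner (𝕜 := ℂ) (v j) x)
  have hsum : HasSum (fun p => ∑ j, l j * v j n * inner ℂ (v j p) (x p))
      (∑ j, l j * v j n * inner ℂ (v j) x) := hasSum_sum fun j _ => hinner j
  calc (diagonalOp l v x : ℕ → ℂ) n
    _ = ∑ j, l j * v j n * inner ℂ (v j) x := by
      rw [diagonalOp_apply, lp.coeFn_sum, Finset.sum_apply]
      exact Finset.sum_congr rfl fun j _ => by
        rw [lp.coeFn_smul, Pi.smul_apply, smul_eq_mul, mul_right_comm]
    _ = ∑' p, c (n + p) * x p := by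
      rw [← hsum.tsum_eq]
      refine tsum_congr fun p => ?_
      rw [hc, Finset.sum_mul]
      exact Finset.sum_congr rfl fun j _ => by rw [RCLike.inner_apply']; ring

variable [DecidableEq ι]

section ShiftPowers

variable {T : Matrix ι ι ℝ} {l u : ι → ℝ}

lemma sum_range_vecMulVec_vecMul_pow (hT : Tᵀ * T = 1 - vecMulVec u u) (n : ℕ) :
    ∑ m ∈ Finset.range n, vecMulVec (u ᵥ* T ^ m) (u ᵥ* T ^ m) = 1 - (T ^ n)ᵀ * T ^ n := by
  induction n with
  | zero => simp
  | succ n ih =>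
    have hu : vecMulVec u u = 1 - Tᵀ * T := by rw [hT, sub_sub_cancel]
    have hn : vecMulVec (u ᵥ* T ^ n) (u ᵥ* T ^ n) = (T ^ n)ᵀ * vecMulVec u u * T ^ n := by
      rw [mul_vecMulVec, vecMulVec_mul, mulVec_transpose]
    rw [Finset.sum_range_succ, ih, hn, hu, pow_succ', transpose_mul]
    noncomm_ring

lemma hasSum_vecMul_pow_mul (hT : Tᵀ * T = 1 - vecMulVec u u) {r : ℝ} (hr : r ∈ Set.Ioo 0 1)
    (hO : ∀ i j, (fun n : ℕ => (T ^ n) i j) =O[atTop] fun n => r ^ n) (i j : ι) :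
    HasSum (fun n => (u ᵥ* T ^ n) i * (u ᵥ* T ^ n) j) (if i = j then 1 else 0) := by
  have hT0 (i j) : Tendsto (fun n : ℕ => (T ^ n) i j) atTop (nhds 0) :=
    (hO i j).trans_tendsto (tendsto_pow_atTop_nhds_zero_of_lt_one hr.1.le hr.2)
  have huO (i) : (fun n : ℕ => (u ᵥ* T ^ n) i) =O[atTop] fun n => r ^ n :=
    IsBigO.fun_sum fun j _ => (hO j i).const_mul_left (u j)
  have hsummable : Summable fun n => (u ᵥ* T ^ n) i * (u ᵥ* T ^ n) j := by
    refine summable_of_isBigO_nat (summable_geometric_of_lt_one (sq_nonneg r)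
      (pow_lt_one₀ hr.1.le hr.2 two_ne_zero)) ?_
    simpa only [← mul_pow, ← sq, pow_right_comm r] using (huO i).mul (huO j)
  refine hsummable.hasSum_iff_tendsto_nat.2 ?_
  have hpartial (n : ℕ) : ∑ m ∈ Finset.range n, (u ᵥ* T ^ m) i * (u ᵥ* T ^ m) j =
      (1 : Matrix ι ι ℝ) i j - ∑ k, (T ^ n) k i * (T ^ n) k j := by
    have h := congrFun₂ (sum_range_vecMulVec_vecMul_pow hT n) i j
    simpa only [Matrix.sum_apply, vecMulVec_apply, Matrix.sub_apply, mul_apply,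
      transpose_apply] using h
  simp only [hpartial]
  simpa [one_apply] using tendsto_const_nhds.sub
    (tendsto_finsetSum Finset.univ fun k _ => (hT0 k i).mul (hT0 k j))

lemma mul_dotProduct_vecMul_pow_add (hTl : T * diagonal l = diagonal l * Tᵀ) (n p : ℕ) :
    (l * u) ⬝ᵥ (u ᵥ* T ^ (n + p)) = (u ᵥ* T ^ n) ⬝ᵥ (diagonal l *ᵥ (u ᵥ* T ^ p)) := by
  have hpow : T ^ p * diagonal l = diagonal l * (T ^ p)ᵀ := by
    rw [transpose_pow]
    exact (SemiconjBy.pow_right (show SemiconjBy (diagonal l) Tᵀ T from hTl.symm) p).eq.symm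
  have hl : l * u = diagonal l *ᵥ u := (funext fun i => mulVec_diagonal l u i).symm
  rw [pow_add, ← vecMul_vecMul, dotProduct_comm, ← dotProduct_mulVec, hl, mulVec_mulVec, hpow,
    ← mulVec_mulVec, mulVec_transpose]

end ShiftPowers

end Realization

section Existence

open Matrix Filter Asymptotics

variable {ι : Type*} [Fintype ι] [DecidableEq ι] {ζ γ a b : ι → ℝ}

lemma spectralSymbol_add (hζ : ∀ j, ζ j ≠ 0) (n p : ℕ) :
    spectralSymbol ζ γ a b (n + p) =
      ∑ j, ζ j * eigenvectorCoord ζ γ a b n j * eigenvectorCoord ζ γ a b p j := by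
  have ha : a = ζ * (a / ζ) := funext fun j => (mul_div_cancel₀ (a j) (hζ j)).symm
  have h := mul_dotProduct_vecMul_pow_add (u := a / ζ)
    (shiftMatrix_mul_diagonal_comm (γ := γ) (a := a) (b := b) hζ) n p
  rw [← ha] at h
  rw [spectralSymbol, eigenvectorCoord, h, dotProduct]
  exact Finset.sum_congr rfl fun j _ => by
    rw [mulVec_diagonal, eigenvectorCoord, eigenvectorCoord]; ring

lemma spectralSymbol_add_succ (hζ : ∀ j, ζ j ≠ 0) (n p : ℕ) :
    spectralSymbol ζ γ a b (n + p + 1) =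
      ∑ k, γ k * (overlapMatrix ζ γ a b *ᵥ eigenvectorCoord ζ γ a b n) k *
        (overlapMatrix ζ γ a b *ᵥ eigenvectorCoord ζ γ a b p) k := by
  set x := eigenvectorCoord ζ γ a b with hx
  set F := overlapMatrix ζ γ a b with hF
  calc spectralSymbol ζ γ a b (n + p + 1)
    _ = x (n + 1) ⬝ᵥ (diagonal ζ *ᵥ x p) := by
      rw [add_right_comm, spectralSymbol_add hζ, dotProduct]
      exact Finset.sum_congr rfl fun j _ => by rw [mulVec_diagonal]; ring
    _ = x n ⬝ᵥ (shiftedHankelMatrix ζ γ a b *ᵥ x p) := by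
      rw [hx, eigenvectorCoord_succ, ← dotProduct_mulVec, mulVec_mulVec,
        shiftMatrix_mul_diagonal hζ]
    _ = (F *ᵥ x n) ⬝ᵥ (diagonal γ *ᵥ (F *ᵥ x p)) := by
      rw [shiftedHankelMatrix, ← hF, ← mulVec_mulVec, ← mulVec_mulVec, dotProduct_mulVec,
        vecMul_transpose]
    _ = ∑ k, γ k * (F *ᵥ x n) k * (F *ᵥ x p) k :=
      Finset.sum_congr rfl fun k _ => by rw [mulVec_diagonal]; ring

namespace IsSpectralWeight

lemma exists_isBigO_shiftMatrix_pow (h : IsSpectralWeight ζ γ a b) (hζ0 : ∀ j, ζ j ≠ 0)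
    (hζ : Function.Injective ζ) (hγ : Function.Injective (γ ^ 2))
    (hζγ : ∀ j k, ζ j ^ 2 ≠ γ k ^ 2) : ∃ r ∈ Set.Ioo (0 : ℝ) 1, ∀ i j,
      (fun n : ℕ => (shiftMatrix ζ γ a b ^ n) i j) =O[atTop] fun n => r ^ n :=
  exists_isBigO_pow_apply_of_transpose_mul_self (h.transpose_shiftMatrix_mul_self hζ0 hγ hζγ)
    (shiftMatrix_mul_diagonal_comm hζ0) hζ fun j => div_ne_zero (h.left_ne_zero hγ hζγ j) (hζ0 j)

lemma inH12_spectralSymbol (h : IsSpectralWeight ζ γ a b) (hζ0 : ∀ j, ζ j ≠ 0)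
    (hζ : Function.Injective ζ) (hγ : Function.Injective (γ ^ 2))
    (hζγ : ∀ j k, ζ j ^ 2 ≠ γ k ^ 2) : InH12 fun n => (spectralSymbol ζ γ a b n : ℂ) := by
  obtain ⟨r, hr, hO⟩ := h.exists_isBigO_shiftMatrix_pow hζ0 hζ hγ hζγ
  refine inH12_of_isBigO_pow hr (Complex.isBigO_ofReal_left.2 ?_)
  exact IsBigO.fun_sum fun i _ =>
    (IsBigO.fun_sum fun j _ => (hO j i).const_mul_left _).const_mul_left _

lemma exists_orthonormal_isHankelOp (h : IsSpectralWeight ζ γ a b) (hζ0 : ∀ j, ζ j ≠ 0)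
    (hζ : Function.Injective ζ) (hγ : Function.Injective (γ ^ 2))
    (hζγ : ∀ j k, ζ j ^ 2 ≠ γ k ^ 2) :
    ∃ v w : ι → L2, Orthonormal ℂ v ∧ Orthonormal ℂ w ∧
      IsHankelOp (fun n => (spectralSymbol ζ γ a b n : ℂ)) (diagonalOp (fun j => (ζ j : ℂ)) v) ∧
      IsHankelOp (shiftSeq fun n => (spectralSymbol ζ γ a b n : ℂ))
        (diagonalOp (fun k => (γ k : ℂ)) w) := by
  obtain ⟨r, hr, hO⟩ := h.exists_isBigO_shiftMatrix_pow hζ0 hζ hγ hζγ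
  obtain ⟨v, hv, hvn⟩ := exists_orthonormal_coe_eq
    (f := fun j n => eigenvectorCoord ζ γ a b n j)
    (hasSum_vecMul_pow_mul (h.transpose_shiftMatrix_mul_self hζ0 hγ hζγ) hr hO)
  set F := overlapMatrix ζ γ a b with hF
  set U : Matrix ι ι ℂ := F.map Complex.ofRealHom
  have hU : U * Uᴴ = 1 := by
    have hUT : Uᴴ = Fᵀ.map Complex.ofRealHom := by ext; simp [U]
    rw [hUT, ← Matrix.map_mul, h.overlapMatrix_mul_transpose hγ hζγ]
    exact Matrix.map_one _ (map_zero _) (map_one _)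
  have hwn (k n) : (∑ j, U k j • v j : L2) n =
      ((F *ᵥ eigenvectorCoord ζ γ a b n) k : ℂ) := by
    rw [lp.coeFn_sum, Finset.sum_apply, mulVec, dotProduct, Complex.ofReal_sum]
    exact Finset.sum_congr rfl fun j _ => by
      rw [lp.coeFn_smul, Pi.smul_apply, hvn, smul_eq_mul, Complex.ofReal_mul]; rfl
  refine ⟨v, fun k => ∑ j, U k j • v j, hv, orthonormal_sum_smul hv hU,
    isHankelOp_diagonalOp fun n p => ?_, isHankelOp_diagonalOp fun n p => ?_⟩
  · simp [spectralSymbol_add hζ0, hvn]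
  · simp only [shiftSeq, spectralSymbol_add_succ hζ0, hwn]
    simp [hF]

end IsSpectralWeight

end Existence

section RankOnePerturbation

open Matrix

variable {𝕜 E ι : Type*} [RCLike 𝕜] [NormedAddCommGroup E] [InnerProductSpace 𝕜 E] [Fintype ι]

lemma inner_diagonalOp_diagonalOp_self {l : ι → ℝ} {v : ι → E} (hv : Orthonormal 𝕜 v) (x : E)
    (j : ι) :
    inner 𝕜 (diagonalOp (fun j => (l j : 𝕜)) v x) (diagonalOp (fun j => (l j : 𝕜)) v (v j)) =
      (l j : 𝕜) ^ 2 * inner 𝕜 x (v j) := by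
  rw [diagonalOp_apply_self hv, inner_smul_right, ← inner_conj_symm, inner_diagonalOp_right hv,
    map_mul, RCLike.conj_ofReal, inner_conj_symm, ← mul_assoc, sq]

/-- `K = diagonalOp ζ e` and `L = diagonalOp γ f` are self-adjoint operators of finite rank such
that `K ^ 2 = L ^ 2 + φ* φ` for a linear functional `φ`, whose values `a` and `b` on the
eigenvectors are real and nonnegative. -/
structure IsRankOnePerturbation (ζ γ a b : ι → ℝ) (e f : ι → E) (φ : E →ₗ[𝕜] 𝕜) : Prop where
  orthonormal_left : Orthonormal 𝕜 e
  orthonormal_right : Orthonormal 𝕜 f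
  inner_eq (x y : E) :
    inner 𝕜 (diagonalOp (fun j => (ζ j : 𝕜)) e x) (diagonalOp (fun j => (ζ j : 𝕜)) e y) =
      conj (φ x) * φ y +
        inner 𝕜 (diagonalOp (fun k => (γ k : 𝕜)) f x) (diagonalOp (fun k => (γ k : 𝕜)) f y)
  apply_left (j : ι) : φ (e j) = a j
  apply_right (k : ι) : φ (f k) = b k
  left_nonneg (j : ι) : 0 ≤ a j
  right_nonneg (k : ι) : 0 ≤ b k

namespace IsRankOnePerturbation

variable {ζ γ a b : ι → ℝ} {e f : ι → E} {φ : E →ₗ[𝕜] 𝕜}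

lemma inner_eq_overlapMatrix (h : IsRankOnePerturbation ζ γ a b e f φ)
    (hζγ : ∀ j k, ζ j ^ 2 ≠ γ k ^ 2) (k j : ι) :
    inner 𝕜 (f k) (e j) = overlapMatrix ζ γ a b k j := by
  have hne : (ζ j : 𝕜) ^ 2 - (γ k : 𝕜) ^ 2 ≠ 0 := by
    exact_mod_cast sub_ne_zero.2 (hζγ j k)
  have hkj := h.inner_eq (f k) (e j)
  rw [inner_diagonalOp_diagonalOp_self h.orthonormal_left, h.apply_left, h.apply_right,
    RCLike.conj_ofReal, diagonalOp_apply_self h.orthonormal_right, inner_smul_left,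
    RCLike.conj_ofReal, inner_diagonalOp_right h.orthonormal_right] at hkj
  rw [overlapMatrix, of_apply]
  push_cast
  rw [eq_div_iff hne]
  linear_combination hkj

lemma right_eq_sum (h : IsRankOnePerturbation ζ γ a b e f φ) (hγ : ∀ k, γ k ≠ 0)
    (hζγ : ∀ j k, ζ j ^ 2 ≠ γ k ^ 2) (k : ι) :
    f k = ∑ j, (overlapMatrix ζ γ a b k j : 𝕜) • e j := by
  set x := f k - ∑ j, (overlapMatrix ζ γ a b k j : 𝕜) • e j with hx
  have hex (j) : inner 𝕜 (e j) x = 0 := by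
    rw [hx, inner_sub_right, h.orthonormal_left.inner_right_fintype, ← inner_conj_symm,
      h.inner_eq_overlapMatrix hζγ, RCLike.conj_ofReal, sub_self]
  have hKx : diagonalOp (fun j => (ζ j : 𝕜)) e x = 0 := by simp [diagonalOp_apply, hex]
  have hLx : diagonalOp (fun k => (γ k : 𝕜)) f x = 0 := by
    have hxx := h.inner_eq x x
    rw [hKx, inner_zero_left, RCLike.conj_mul, inner_self_eq_norm_sq_to_K] at hxx
    have hxx' : (0 : ℝ) = ‖φ x‖ ^ 2 + ‖diagonalOp (fun k => (γ k : 𝕜)) f x‖ ^ 2 := by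
      exact_mod_cast hxx
    exact norm_eq_zero.1 (pow_eq_zero_iff two_ne_zero |>.1 (by nlinarith [sq_nonneg ‖φ x‖]))
  have hfx : inner 𝕜 (f k) x = 0 := by
    have hk := inner_diagonalOp_right (l := fun k => (γ k : 𝕜)) h.orthonormal_right k x
    rw [hLx, inner_zero_right] at hk
    exact (mul_eq_zero.1 hk.symm).resolve_left (by exact_mod_cast hγ k)
  have hxx : inner 𝕜 x x = 0 := by
    have hxf : inner 𝕜 x (f k) = 0 := inner_eq_zero_symm.1 hfx
    have hxe (j) : inner 𝕜 x (e j) = 0 := inner_eq_zero_symm.1 (hex j)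
    nth_rw 2 [hx]
    simp only [inner_sub_right, inner_sum, inner_smul_right, hxf, hxe, mul_zero,
      Finset.sum_const_zero, sub_zero]
  exact sub_eq_zero.1 (inner_self_eq_zero.1 hxx)

lemma isSpectralWeight (h : IsRankOnePerturbation ζ γ a b e f φ) (hγ : ∀ k, γ k ≠ 0)
    (hζγ : ∀ j k, ζ j ^ 2 ≠ γ k ^ 2) : IsSpectralWeight ζ γ a b := by
  have hsq (k) : b k ^ 2 * ∑ j, a j ^ 2 / (ζ j ^ 2 - γ k ^ 2) ^ 2 = 1 := by
    have hnorm : ∑ j, overlapMatrix ζ γ a b k j ^ 2 = 1 := by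
      have hkk : inner 𝕜 (f k) (f k) = 1 := by
        rw [inner_self_eq_norm_sq_to_K, h.orthonormal_right.1 k, RCLike.ofReal_one, one_pow]
      rw [h.right_eq_sum hγ hζγ k, h.orthonormal_left.inner_sum] at hkk
      simp only [RCLike.conj_ofReal, ← sq] at hkk
      exact_mod_cast hkk
    rw [← hnorm, Finset.mul_sum]
    exact Finset.sum_congr rfl fun j _ => by
      rw [overlapMatrix, of_apply, div_pow, mul_pow, mul_div_assoc]
  refine ⟨h.left_nonneg, h.right_nonneg, fun k => ?_, hsq⟩
  have hbk : b k ≠ 0 := fun hbk => by simpa [hbk] using hsq k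
  have hφ : b k = ∑ j, overlapMatrix ζ γ a b k j * a j := by
    have hk := congrArg φ (h.right_eq_sum hγ hζγ k)
    simp only [h.apply_right, map_sum, map_smul, h.apply_left, smul_eq_mul] at hk
    exact_mod_cast hk
  refine mul_left_cancel₀ hbk ?_
  rw [mul_one, Finset.mul_sum]
  conv_rhs => rw [hφ]
  exact Finset.sum_congr rfl fun j _ => by rw [overlapMatrix, of_apply]; ring

lemma diagonalOp_apply_left [DecidableEq ι] (h : IsRankOnePerturbation ζ γ a b e f φ)
    (hγ : ∀ k, γ k ≠ 0) (hζγ : ∀ j k, ζ j ^ 2 ≠ γ k ^ 2) (j : ι) :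
    diagonalOp (fun k => (γ k : 𝕜)) f (e j) =
      ∑ i, (shiftedHankelMatrix ζ γ a b i j : 𝕜) • e i := by
  simp only [diagonalOp_apply, h.inner_eq_overlapMatrix hζγ]
  conv_lhs => enter [2, k]; rw [h.right_eq_sum hγ hζγ k, Finset.smul_sum]
  rw [Finset.sum_comm]
  refine Finset.sum_congr rfl fun i _ => ?_
  simp only [smul_smul, ← Finset.sum_smul]
  congr 1
  rw [shiftedHankelMatrix, mul_apply, RCLike.ofReal_sum]
  refine Finset.sum_congr rfl fun k _ => ?_
  rw [mul_diagonal, transpose_apply]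
  push_cast
  ring

end IsRankOnePerturbation

end RankOnePerturbation

section Hankel

open Matrix

lemma IsHankelOp.apply_single {c : ℕ → ℂ} {Γ : L2 →L[ℂ] L2} (hΓ : IsHankelOp c Γ) (n p : ℕ) :
    Γ (lp.single 2 p 1) n = c (n + p) := by
  rw [hΓ, tsum_eq_single p fun q hq => by rw [lp.single_apply_ne _ _ _ hq, mul_zero]]
  simp

lemma IsHankelOp.isSymmetric {c : ℕ → ℝ} {Γ : L2 →L[ℂ] L2}
    (hΓ : IsHankelOp (fun n => (c n : ℂ)) Γ) : Γ.IsSymmetric := by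
  rw [← ContinuousLinearMap.isSelfAdjoint_iff_isSymmetric,
    ContinuousLinearMap.isSelfAdjoint_iff']
  ext x n
  calc ContinuousLinearMap.adjoint Γ x n
    _ = ⟪lp.single (E := fun _ : ℕ => ℂ) 2 n 1, ContinuousLinearMap.adjoint Γ x⟫_ℂ := by
      simp [lp.inner_single_left]
    _ = ∑' p, ⟪Γ (lp.single 2 n 1) p, x p⟫_ℂ := by
      rw [ContinuousLinearMap.adjoint_inner_right, lp.inner_eq_tsum]
    _ = Γ x n := by
      rw [hΓ x n]
      refine tsum_congr fun p => ?_
      rw [hΓ.apply_single, RCLike.inner_apply, Complex.conj_ofReal, add_comm, mul_comm]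

lemma IsHankelOp.shift_apply {c : ℕ → ℂ} {Γ Γt : L2 →L[ℂ] L2} (hΓ : IsHankelOp c Γ)
    (hΓt : IsHankelOp (shiftSeq c) Γt) (x : L2) (n : ℕ) : Γt x n = Γ x (n + 1) := by
  rw [hΓ, hΓt]
  exact tsum_congr fun p => by rw [shiftSeq, add_right_comm]

lemma inner_eq_add_inner_of_shift {x y x' y' : L2} (hx : ∀ n, x' n = x (n + 1))
    (hy : ∀ n, y' n = y (n + 1)) : ⟪x, y⟫_ℂ = conj (x 0) * y 0 + ⟪x', y'⟫_ℂ := by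
  rw [lp.inner_eq_tsum, (lp.summable_inner (𝕜 := ℂ) x y).tsum_eq_zero_add, lp.inner_eq_tsum,
    RCLike.inner_apply, mul_comm]
  simp only [hx, hy]

/-- The functional `x ↦ (Γ x)_0`. -/
def evalZero (Γ : L2 →L[ℂ] L2) : L2 →ₗ[ℂ] ℂ :=
  lp.evalₗ (fun _ => ℂ) 2 0 ∘ₗ Γ.toLinearMap

variable {ι : Type*} [Fintype ι] {ζ γ a b : ι → ℝ}

lemma IsHankelOp.exists_isRankOnePerturbation {c : ℕ → ℝ} {Γ Γt : L2 →L[ℂ] L2}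
    (hΓ : IsHankelOp (fun n => (c n : ℂ)) Γ) (hΓt : IsHankelOp (shiftSeq fun n => (c n : ℂ)) Γt)
    (hspec : HasFiniteSpectrum Γ.toLinearMap fun j => (ζ j : ℂ))
    (hspect : HasFiniteSpectrum Γt.toLinearMap fun k => (γ k : ℂ))
    (hζ0 : ∀ j, ζ j ≠ 0) (hγ0 : ∀ k, γ k ≠ 0) (hζ : Function.Injective ζ)
    (hγ : Function.Injective γ) :
    ∃ (a b : ι → ℝ) (e f : ι → L2), Γ = diagonalOp (fun j => (ζ j : ℂ)) e ∧
      Γt = diagonalOp (fun k => (γ k : ℂ)) f ∧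
      IsRankOnePerturbation ζ γ a b e f (evalZero Γ) := by
  have hΓt_symm : Γt.IsSymmetric := IsHankelOp.isSymmetric (c := fun n => c (n + 1)) hΓt
  obtain ⟨e, he, rfl, hφe⟩ := exists_orthonormal_eq_diagonalOp hΓ.isSymmetric
    (fun j => Complex.ofReal_ne_zero.2 (hζ0 j)) (Complex.ofReal_injective.comp hζ) hspec
    (evalZero Γ)
  obtain ⟨f, hf, rfl, hφf⟩ := exists_orthonormal_eq_diagonalOp hΓt_symm
    (fun k => Complex.ofReal_ne_zero.2 (hγ0 k)) (Complex.ofReal_injective.comp hγ) hspect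
    (evalZero (diagonalOp (fun j => (ζ j : ℂ)) e))
  exact ⟨_, _, e, f, rfl, rfl, he, hf,
    fun x y => inner_eq_add_inner_of_shift (hΓ.shift_apply hΓt x) (hΓ.shift_apply hΓt y),
    hφe, hφf, fun _ => norm_nonneg _, fun _ => norm_nonneg _⟩

variable [DecidableEq ι]

lemma IsRankOnePerturbation.coe_left_eq_eigenvectorCoord {c : ℕ → ℂ} {Γ Γt : L2 →L[ℂ] L2}
    {e f : ι → L2} (h : IsRankOnePerturbation ζ γ a b e f (evalZero Γ)) (hΓ : IsHankelOp c Γ)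
    (hΓt : IsHankelOp (shiftSeq c) Γt) (hΓe : Γ = diagonalOp (fun j => (ζ j : ℂ)) e)
    (hΓf : Γt = diagonalOp (fun k => (γ k : ℂ)) f) (hζ0 : ∀ j, ζ j ≠ 0) (hγ0 : ∀ k, γ k ≠ 0)
    (hζγ : ∀ j k, ζ j ^ 2 ≠ γ k ^ 2) (n : ℕ) (j : ι) :
    e j n = eigenvectorCoord ζ γ a b n j := by
  have hζ0' (j) : (ζ j : ℂ) ≠ 0 := Complex.ofReal_ne_zero.2 (hζ0 j)
  have hΓ_apply (j n) : Γ (e j) n = ζ j * e j n := by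
    rw [hΓe, diagonalOp_apply_self h.orthonormal_left, lp.coeFn_smul, Pi.smul_apply, smul_eq_mul]
  induction n generalizing j with
  | zero =>
    have h0 : ζ j * e j 0 = a j := (hΓ_apply j 0).symm.trans (h.apply_left j)
    simp [eigenvectorCoord, ← h0, hζ0' j]
  | succ n ih =>
    have hΓt_apply : Γt (e j) = ∑ i, (shiftedHankelMatrix ζ γ a b i j : ℂ) • e i :=
      hΓf ▸ h.diagonalOp_apply_left hγ0 hζγ j
    have hsucc : ζ j * e j (n + 1) = ∑ i, (shiftedHankelMatrix ζ γ a b i j : ℂ) * e i n := by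
      rw [← hΓ_apply, ← hΓ.shift_apply hΓt, hΓt_apply, lp.coeFn_sum, Finset.sum_apply]
      exact Finset.sum_congr rfl fun i _ => by rw [lp.coeFn_smul, Pi.smul_apply, smul_eq_mul]
    refine mul_left_cancel₀ (hζ0' j) (hsucc.trans ?_)
    rw [eigenvectorCoord_succ, vecMul, dotProduct, Complex.ofReal_sum, Finset.mul_sum]
    refine Finset.sum_congr rfl fun i _ => ?_
    rw [ih, shiftMatrix, mul_diagonal, Pi.inv_apply]
    push_cast
    field_simp [hζ0' j]

lemma IsHankelOp.exists_eq_spectralSymbol {c : ℕ → ℝ} {Γ Γt : L2 →L[ℂ] L2}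
    (hΓ : IsHankelOp (fun n => (c n : ℂ)) Γ) (hΓt : IsHankelOp (shiftSeq fun n => (c n : ℂ)) Γt)
    (hspec : HasFiniteSpectrum Γ.toLinearMap fun j => (ζ j : ℂ))
    (hspect : HasFiniteSpectrum Γt.toLinearMap fun k => (γ k : ℂ))
    (hζ0 : ∀ j, ζ j ≠ 0) (hγ0 : ∀ k, γ k ≠ 0) (hζ : Function.Injective ζ)
    (hγ : Function.Injective γ) (hζγ : ∀ j k, ζ j ^ 2 ≠ γ k ^ 2) :
    ∃ a b, IsSpectralWeight ζ γ a b ∧ c = spectralSymbol ζ γ a b := by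
  obtain ⟨a, b, e, f, hΓe, hΓf, h⟩ :=
    hΓ.exists_isRankOnePerturbation hΓt hspec hspect hζ0 hγ0 hζ hγ
  have hcoord := h.coe_left_eq_eigenvectorCoord hΓ hΓt hΓe hΓf hζ0 hγ0 hζγ
  refine ⟨a, b, h.isSpectralWeight hγ0 hζγ, funext fun n => Complex.ofReal_injective ?_⟩
  calc (c n : ℂ)
    _ = Γ (lp.single 2 0 1) n := (hΓ.apply_single n 0).symm
    _ = ∑ j, ζ j * conj (e j 0) * e j n := by
      rw [hΓe, diagonalOp_apply, lp.coeFn_sum, Finset.sum_apply]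
      refine Finset.sum_congr rfl fun j _ => ?_
      rw [lp.coeFn_smul, Pi.smul_apply, smul_eq_mul, lp.inner_single_right]
      simp
    _ = spectralSymbol ζ γ a b n := by
      rw [← add_zero n, spectralSymbol_add hζ0, add_zero, Complex.ofReal_sum]
      refine Finset.sum_congr rfl fun j _ => ?_
      rw [hcoord, hcoord, Complex.conj_ofReal]
      push_cast
      ring

end Hankel

/-- There exists a unique real sequence `c ∈ h^{1/2}` such that the (self-adjoint) Hankel
operator `Γ_c` has rank `N` with nonzero eigenvalues exactly `ζ_1, …, ζ_N` and the shifted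
Hankel operator `Γ̃_c` has rank `N` with nonzero eigenvalues exactly `γ_1, …, γ_N`. -/
theorem statement0 (N : ℕ) (hN : 1 ≤ N) (ζ γ : Fin N → ℝ)
    (h1 : ∀ j : Fin N, |γ j| < |ζ j|)
    (h2 : ∀ j k : Fin N, (j : ℕ) + 1 = (k : ℕ) → |ζ k| < |γ j|)
    (h3 : ∀ j : Fin N, 0 < |γ j|) :
    ∃! c : ℕ → ℝ,
      InH12 (fun n => (c n : ℂ)) ∧
      ∃ Γ Γt : L2 →L[ℂ] L2,
        IsHankelOp (fun n => (c n : ℂ)) Γ ∧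
        IsHankelOp (shiftSeq fun n => (c n : ℂ)) Γt ∧
        LinearMap.rank Γ.toLinearMap = N ∧
        {z : ℂ | z ≠ 0 ∧ Module.End.HasEigenvalue Γ.toLinearMap z}
          = Set.range (fun j : Fin N => (ζ j : ℂ)) ∧
        LinearMap.rank Γt.toLinearMap = N ∧
        {z : ℂ | z ≠ 0 ∧ Module.End.HasEigenvalue Γt.toLinearMap z}
          = Set.range (fun j : Fin N => (γ j : ℂ)) := by
  have hsq : Interlaces (ζ ^ 2) (γ ^ 2) :=
    interlaces_of_succ (fun j => sq_lt_sq.2 (h1 j)) fun j k hjk => sq_lt_sq.2 (h2 j k hjk)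
  have hζ0 (j) : ζ j ≠ 0 := abs_pos.1 ((h3 j).trans (h1 j))
  have hγ0 (k) : γ k ≠ 0 := abs_pos.1 (h3 k)
  have hζ2 : Function.Injective (ζ ^ 2) := hsq.strictAnti_left.injective
  have hγ2 : Function.Injective (γ ^ 2) := hsq.strictAnti_right.injective
  have hζ : Function.Injective ζ := fun _ _ h => hζ2 (congrArg (· ^ 2) h)
  have hγ : Function.Injective γ := fun _ _ h => hγ2 (congrArg (· ^ 2) h)
  obtain ⟨a, b, hab⟩ := exists_isSpectralWeight hsq
  obtain ⟨v, w, hv, hw, hΓ, hΓt⟩ := hab.exists_orthonormal_isHankelOp hζ0 hζ hγ2 hsq.ne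
  have hspec := hasFiniteSpectrum_diagonalOp hv fun j => Complex.ofReal_ne_zero.2 (hζ0 j)
  have hspect := hasFiniteSpectrum_diagonalOp hw fun k => Complex.ofReal_ne_zero.2 (hγ0 k)
  simp only [HasFiniteSpectrum, Fintype.card_fin] at hspec hspect
  refine ⟨spectralSymbol ζ γ a b, ⟨hab.inH12_spectralSymbol hζ0 hζ hγ2 hsq.ne, _, _, hΓ, hΓt,
    hspec.1, hspec.2, hspect.1, hspect.2⟩, ?_⟩
  rintro c ⟨-, Γ, Γt, hΓ, hΓt, hrank, hev, hrankt, hevt⟩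
  obtain ⟨a', b', hab', rfl⟩ := hΓ.exists_eq_spectralSymbol hΓt
    ⟨by rw [hrank, Fintype.card_fin], hev⟩ ⟨by rw [hrankt, Fintype.card_fin], hevt⟩
    hζ0 hγ0 hζ hγ hsq.ne
  obtain ⟨rfl, rfl⟩ := hab.unique hab' hζ2 hγ2 hsq.ne
  rfl

end
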